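/- Let x be a one-sided infinite word over A and suppose Fac(x) ⊆ S^k for some factorial language S ⊆ A* and some positive integer k. Then there exists a suffix y of x such that Fac(y) ⊆ S. In particular, if p_S(n) = O(n^α) for some α ≥ 0, then p_x(n) = O(n^α). -/

import Mathlib

open scoped ENNReal Pointwise

universe u

variable {A : Type u}

/-- The factor of `x` of length `n` starting at position `i`. -/
def wordSeg (x : ℕ → A) (i n : ℕ) : List A := (List.range n).map fun j => x (i + j)

/-- The set of finite factors of a one-sided infinite word (including the empty word). -/
def Fac (x : ℕ → A) : Set (List A) := {u | ∃ i n, u = wordSeg x i n}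

/-- The factor of a two-sided word `x` of length `n` starting at position `i`. -/
def wordSegZ (x : ℤ → A) (i : ℤ) (n : ℕ) : List A := (List.range n).map fun j => x (i + j)

/-- The set of finite factors of a two-sided infinite word (including the empty word). -/
def FacZ (x : ℤ → A) : Set (List A) := {u | ∃ (i : ℤ) (n : ℕ), u = wordSegZ x i n}

/-- The complexity of a language: the number of words of length `n` in it. -/
noncomputable def complexity (L : Set (List A)) (n : ℕ) : ℕ :=
  {u ∈ L | u.length = n}.ncard

/-- The accumulative complexity `p*_L(n) = Σ_{i=0}^{n} p_L(i)`. -/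
noncomputable def accComplexity (L : Set (List A)) (n : ℕ) : ℕ :=
  ∑ i ∈ Finset.range (n + 1), complexity L i

/-- Concatenation (product) of two languages. -/
def prodL (S T : Set (List A)) : Set (List A) := {w | ∃ s ∈ S, ∃ t ∈ T, w = s ++ t}

/-- `powL S k` = `S^k`, the set of concatenations of `k` elements of `S`. -/
def powL (S : Set (List A)) : ℕ → Set (List A)
  | 0 => {([] : List A)}
  | k + 1 => prodL (powL S k) S

/-- `f(n) = O(n^α)`. -/
def PolyBound (f : ℕ → ℕ) (α : ℝ) : Prop :=
  ∃ C : ℝ, ∀ n : ℕ, 1 ≤ n → (f n : ℝ) ≤ C * (n : ℝ) ^ α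

/-- The `α`-dimension `d_α(L)`: infimum of the integers `k ≥ 1` such that `L ⊆ S^k`
for some language `S` with `p_S(n) = O(n^α)`, with `inf ∅ = ⊤`. -/
noncomputable def polyDim (α : ℝ) (L : Set (List A)) : ℕ∞ :=
  sInf {k : ℕ∞ | ∃ m : ℕ, k = m ∧ 1 ≤ m ∧
    ∃ S : Set (List A), PolyBound (complexity S) α ∧ L ⊆ powL S m}

/-- The accumulative `α`-dimension `d*_α(L)`. -/
noncomputable def polyDimStar (α : ℝ) (L : Set (List A)) : ℕ∞ :=
  sInf {k : ℕ∞ | ∃ m : ℕ, k = m ∧ 1 ≤ m ∧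
    ∃ S : Set (List A), PolyBound (accComplexity S) α ∧ L ⊆ powL S m}

/-- The cost `c(L)`: infimum of the `α ≥ 0` with `d_α(L) < +∞`, with `inf ∅ = ⊤`. -/
noncomputable def cost (L : Set (List A)) : ℝ≥0∞ :=
  sInf {a : ℝ≥0∞ | ∃ α : ℝ, 0 ≤ α ∧ a = ENNReal.ofReal α ∧ polyDim α L ≠ ⊤}

/-- A one-sided word is ultimately periodic if it is of the form `u v v v ⋯`. -/
def UltimatelyPeriodic (x : ℕ → A) : Prop :=
  ∃ N p : ℕ, 0 < p ∧ ∀ n : ℕ, N ≤ n → x (n + p) = x n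

/-- A two-sided word is eventually periodic if it is periodic far enough to the right
and far enough to the left. -/
def EventuallyPeriodicZ (x : ℤ → A) : Prop :=
  (∃ p : ℕ, 0 < p ∧ ∃ N : ℤ, ∀ n : ℤ, N ≤ n → x (n + p) = x n) ∧
  (∃ p : ℕ, 0 < p ∧ ∃ N : ℤ, ∀ n : ℤ, n ≤ N → x (n - p) = x n)

/-- A one-sided word is recurrent if each of its factors occurs infinitely often. -/
def Recurrent (x : ℕ → A) : Prop :=
  ∀ u ∈ Fac x, ∀ N : ℕ, ∃ i : ℕ, N ≤ i ∧ u = wordSeg x i u.length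

/-- `u` is a right special factor for the language `F`. -/
def RightSpecial (F : Set (List A)) (u : List A) : Prop :=
  u ∈ F ∧ ∃ a b : A, a ≠ b ∧ u ++ [a] ∈ F ∧ u ++ [b] ∈ F

/-- `M` is a `D`-marker set for a word with factor set `F`: every factor of length
at least `D n` contains a factor of length `n` belonging to `M`. -/
def MarkerSet (D : ℕ) (M F : Set (List A)) : Prop :=
  ∀ n : ℕ, 1 ≤ n → ∀ u ∈ F, D * n ≤ u.length →
    ∃ v ∈ M, v.length = n ∧ v <:+: u

/-- A language is factorial if it contains all factors of its members. -/
def IsFactorial (S : Set (List A)) : Prop := ∀ u ∈ S, ∀ v : List A, v <:+: u → v ∈ S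

/-- The bound `Σ_{k ∈ I_n ∩ ℕ} p_M(2^k)(1 + 4 p(3n)/2^k)` where
`I_n = (log₂(n/(2D)), log₂(2n)]`, i.e. the sum is over natural `k` with
`n/(2D) < 2^k ≤ 2n`. -/
noncomputable def markerBound (M F : Set (List A)) (D n : ℕ) : ℝ :=
  ∑ k ∈ (Finset.range (2 * n + 2)).filter (fun k => n < 2 * D * 2 ^ k ∧ 2 ^ k ≤ 2 * n),
    (complexity M (2 ^ k) : ℝ) * (1 + 4 * (complexity F (3 * n) : ℝ) / 2 ^ k)

-- The word `u = ∏_{i=1}^{∞} a b^i = a b a b b a b b b ⋯` over `{a,b}`, with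
-- `a = false`, `b = true`: position `n` carries an `a` iff `n = (i-1)(i+2)/2` for some
-- `i ≥ 1`, i.e. iff `2n = m(m+3)` for some `m ≥ 0`.
open Classical in
noncomputable def uWord (n : ℕ) : Bool :=
  if ∃ m : ℕ, 2 * n = m * (m + 3) then false else true

/-! Decompose long prefixes of `x` in `S^(k+1)` as a word of `S^k` followed by a word of `S`. If the
left parts can be arbitrarily long, then arbitrarily long prefixes of `x` lie in `S^k`, and one
inducts on `k`. Otherwise the cuts stay below some position `m`, so every factor of `x` starting
beyond `m` is a factor of a right part, hence in `S`.

Only `m` positions start before the suffix `y` at `m`, so `p_x(n) ≤ p_y(n) + m ≤ p_S(n) + m`. As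
`p_S(n) ≥ p_y(n) ≥ 1`, this is at most `(m + 1) p_S(n)`. -/

section

open Filter

variable {x : ℕ → A} {S T : Set (List A)}

theorem length_wordSeg (x : ℕ → A) (i n : ℕ) : (wordSeg x i n).length = n := by
  simp [wordSeg]

theorem wordSeg_add (x : ℕ → A) (i a b : ℕ) :
    wordSeg x i (a + b) = wordSeg x i a ++ wordSeg x (i + a) b := by
  simp [wordSeg, List.range_add, Function.comp_def, Nat.add_assoc]

theorem wordSeg_shift (x : ℕ → A) (m i n : ℕ) :
    wordSeg (fun j => x (j + m)) i n = wordSeg x (i + m) n := by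
  simp [wordSeg, Nat.add_right_comm]

theorem wordSeg_isInfix_wordSeg (x : ℕ → A) {i j a b : ℕ} (hij : i ≤ j) (hle : j + b ≤ i + a) :
    wordSeg x j b <:+: wordSeg x i a := by
  obtain ⟨c, rfl⟩ := Nat.exists_eq_add_of_le hij
  obtain ⟨d, rfl⟩ : ∃ d, a = c + b + d := ⟨a - (c + b), by omega⟩
  rw [wordSeg_add, wordSeg_add]
  exact List.infix_append _ _ _

theorem wordSeg_eq_append_iff {i n : ℕ} {s t : List A} :
    wordSeg x i n = s ++ t ↔
      n = s.length + t.length ∧ wordSeg x i s.length = s ∧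
        wordSeg x (i + s.length) t.length = t := by
  constructor
  · intro h
    have hn : n = s.length + t.length := by
      rw [← List.length_append, ← h, length_wordSeg]
    rw [hn, wordSeg_add] at h
    exact ⟨hn, List.append_inj h (length_wordSeg _ _ _)⟩
  · rintro ⟨rfl, hs, ht⟩
    rw [wordSeg_add, hs, ht]

theorem exists_fac_shift_subset_of_frequently (hS : IsFactorial S) {k : ℕ}
    (h : ∃ᶠ n in atTop, wordSeg x 0 n ∈ powL S k) :
    ∃ m : ℕ, Fac (fun n => x (n + m)) ⊆ S := by
  induction k with
  | zero =>
    obtain ⟨n, hn, hnil⟩ := frequently_atTop.mp h 1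
    have hlen : (wordSeg x 0 n).length = 0 := List.length_eq_zero_iff.mpr hnil
    rw [length_wordSeg] at hlen
    omega
  | succ k ih =>
    by_cases hk : ∃ᶠ n in atTop, wordSeg x 0 n ∈ powL S k
    · exact ih hk
    obtain ⟨m, hm⟩ := eventually_atTop.mp (not_frequently.mp hk)
    refine ⟨m, ?_⟩
    rintro _ ⟨i, l, rfl⟩
    obtain ⟨n, hn, s, hs, t, ht, hst⟩ := frequently_atTop.mp h (i + m + l)
    obtain ⟨hlen, hs_eq, ht_eq⟩ := wordSeg_eq_append_iff.mp hst
    have hcut : s.length < m := by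
      by_contra! hms
      exact hm _ hms (hs_eq.symm ▸ hs)
    refine hS t ht _ ?_
    rw [wordSeg_shift, ← ht_eq]
    exact wordSeg_isInfix_wordSeg x (by omega) (by omega)

theorem exists_fac_shift_subset (hS : IsFactorial S) {k : ℕ} (h : Fac x ⊆ powL S k) :
    ∃ m : ℕ, Fac (fun n => x (n + m)) ⊆ S :=
  exists_fac_shift_subset_of_frequently hS (Frequently.of_forall fun n => h ⟨0, n, rfl⟩)

-- Pitfall: `complexity L n` is `0` when `L` has infinitely many words of length `n`.
theorem complexity_mono {n : ℕ} (hT : {u ∈ T | u.length = n}.Finite) (hST : S ⊆ T) :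
    complexity S n ≤ complexity T n :=
  Set.ncard_le_ncard (fun _ hu => ⟨hST hu.1, hu.2⟩) hT

theorem complexity_pos {n : ℕ} (hS : {u ∈ S | u.length = n}.Finite) {u : List A} (hu : u ∈ S)
    (hn : u.length = n) : 0 < complexity S n :=
  (Set.ncard_pos hS).mpr ⟨u, hu, hn⟩

theorem fac_length_eq (x : ℕ → A) (n : ℕ) :
    {u ∈ Fac x | u.length = n} = Set.range fun i => wordSeg x i n := by
  ext u
  constructor
  · rintro ⟨⟨i, l, rfl⟩, hl⟩
    exact ⟨i, by rw [← hl, length_wordSeg]⟩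
  · rintro ⟨i, rfl⟩
    exact ⟨⟨i, n, rfl⟩, length_wordSeg x i n⟩

theorem range_eq_range_add_union_image_Iio {β : Type*} (f : ℕ → β) (m : ℕ) :
    Set.range f = (Set.range fun i => f (i + m)) ∪ f '' Set.Iio m := by
  ext b
  constructor
  · rintro ⟨i, rfl⟩
    exact (le_or_gt m i).imp (fun hi => ⟨i - m, congrArg f (Nat.sub_add_cancel hi)⟩)
      fun hi => ⟨i, hi, rfl⟩
  · rintro (⟨i, rfl⟩ | ⟨i, -, rfl⟩) <;> exact Set.mem_range_self _

theorem complexity_fac_le_complexity_fac_shift_add (x : ℕ → A) (m n : ℕ) :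
    complexity (Fac x) n ≤ complexity (Fac fun j => x (j + m)) n + m := by
  have hcard : ((fun i => wordSeg x i n) '' Set.Iio m).ncard ≤ m :=
    (Set.ncard_image_le (Set.finite_Iio m)).trans_eq (by simp)
  simp only [complexity, fac_length_eq, wordSeg_shift]
  rw [range_eq_range_add_union_image_Iio _ m]
  exact (Set.ncard_union_le _ _).trans (Nat.add_le_add_left hcard _)

theorem complexity_fac_le_mul {m n : ℕ} (hfin : {u ∈ S | u.length = n}.Finite)
    (hm : Fac (fun j => x (j + m)) ⊆ S) :
    complexity (Fac x) n ≤ (m + 1) * complexity S n := by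
  have hpos : 0 < complexity S n := complexity_pos hfin (hm ⟨0, n, rfl⟩) (length_wordSeg _ _ _)
  calc
    complexity (Fac x) n ≤ complexity (Fac fun j => x (j + m)) n + m :=
      complexity_fac_le_complexity_fac_shift_add x m n
    _ ≤ complexity S n + m := Nat.add_le_add_right (complexity_mono hfin hm) m
    _ ≤ complexity S n + m * complexity S n :=
      Nat.add_le_add_left (Nat.le_mul_of_pos_right m hpos) _
    _ = (m + 1) * complexity S n := by ring

theorem PolyBound.of_le_mul {f g : ℕ → ℕ} {α : ℝ} {c : ℕ} (hg : PolyBound g α)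
    (hfg : ∀ n, f n ≤ c * g n) : PolyBound f α := by
  obtain ⟨C, hC⟩ := hg
  refine ⟨c * C, fun n hn => ?_⟩
  calc
    (f n : ℝ) ≤ c * g n := by exact_mod_cast hfg n
    _ ≤ c * (C * (n : ℝ) ^ α) := mul_le_mul_of_nonneg_left (hC n hn) c.cast_nonneg
    _ = c * C * (n : ℝ) ^ α := (mul_assoc _ _ _).symm

end

theorem stmt9_general {A : Type u} {x : ℕ → A} {S : Set (List A)} (hS : IsFactorial S)
    {k : ℕ} (h : Fac x ⊆ powL S k) :
    (∃ m : ℕ, Fac (fun n => x (n + m)) ⊆ S) ∧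
    ((∀ n, {u ∈ S | u.length = n}.Finite) →
      ∀ α : ℝ, PolyBound (complexity S) α → PolyBound (complexity (Fac x)) α) := by
  obtain ⟨m, hm⟩ := exists_fac_shift_subset hS h
  exact ⟨⟨m, hm⟩, fun hfin _ hbound =>
    hbound.of_le_mul fun n => complexity_fac_le_mul (hfin n) hm⟩

/-- if `Fac(x) ⊆ S^k` for a factorial language `S`, then some suffix `y`
of `x` satisfies `Fac(y) ⊆ S`; in particular `p_S(n) = O(n^α)` implies
`p_x(n) = O(n^α)`. -/
theorem stmt9 (A : Type u) [Fintype A] [Nonempty A] (x : ℕ → A) (S : Set (List A))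
    (hS : IsFactorial S) (k : ℕ) (hk : 1 ≤ k) (h : Fac x ⊆ powL S k) :
    (∃ m : ℕ, Fac (fun n => x (n + m)) ⊆ S) ∧
    (∀ α : ℝ, 0 ≤ α → PolyBound (complexity S) α →
      PolyBound (complexity (Fac x)) α) := by
  have hfin (n : ℕ) : {u ∈ S | u.length = n}.Finite :=
    (List.finite_length_eq A n).subset fun _ hu => hu.2
  exact (stmt9_general hS h).imp_right fun hbound α _ => hbound hfin α
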